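/- As the real number x tends to infinity, ∑_{D=1}^{⌊x⌋} h(D) = (1/4)x²(log x)² + O(x² log x); that is, the function x ↦ (∑_{D=1}^{⌊x⌋} h(D)) − (1/4)x²(log x)² is O(x² log x) as x → ∞. -/

import Mathlib

/-!
The substitution `a = c + s`, `d = b + t` turns `a * d = D + b * c` into
`D = s * t + s * b + t * c` with `s, t ≥ 1`. Hence the sum of `h(D)` over `D ≤ x` counts, for every
pair with `s * t ≤ x`, the lattice points `(b, c)` of the triangle `s * b + t * c ≤ x - s * t`.
Up to boundary effects that number is the area `(x - s * t) ^ 2 / (2 * s * t)`, so the sum is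
`x ^ 2 / 2` times the sum of `1 / (s * t)` over `s * t ≤ x`, with an error `O(x ^ 2 * log x)`.
The latter sum is `∑ s ≤ x, H(x / s) / s` with `H` the harmonic sum, and two uses of
`log y ≤ H(y) ≤ 1 + log y` (the second under the integral of Abel summation) show that it is
`(log x) ^ 2 / 2 + O(log x)`.
-/

open Asymptotics Filter

/-- `orphanCount D` counts quadruples `(a,b,c,d)` of nonnegative integers with
`b + c < D`, `a > c`, `d > b`, and `a*d = D + b*c`. -/
noncomputable def orphanCount (D : ℕ) : ℕ :=
  Set.ncard {q : ℕ × ℕ × ℕ × ℕ |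
    q.2.1 + q.2.2.1 < D ∧ q.1 > q.2.2.1 ∧ q.2.2.2 > q.2.1 ∧
    q.1 * q.2.2.2 = D + q.2.1 * q.2.2.1}

section LatticeTriangle

open Finset

variable {s t M : ℝ}

/-- The lattice points `(b, c)`, `b, c ≥ 0`, of the triangle `s * b + t * c ≤ M`. The bounding box
makes the set finite; it is only meaningful for `s, t > 0`. -/
noncomputable def latticeTriangle (s t M : ℝ) : Finset (ℕ × ℕ) :=
  {q ∈ range (⌊M / s⌋₊ + 1) ×ˢ range (⌊M / t⌋₊ + 1) | s * q.1 + t * q.2 ≤ M}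

theorem mem_latticeTriangle (hs : 0 < s) (ht : 0 < t) {q : ℕ × ℕ} :
    q ∈ latticeTriangle s t M ↔ s * q.1 + t * q.2 ≤ M := by
  simp only [latticeTriangle, mem_filter, mem_product, mem_range, Nat.lt_succ_iff,
    and_iff_right_iff_imp]
  intro hq
  have hb : 0 ≤ s * q.1 := by positivity
  have hc : 0 ≤ t * q.2 := by positivity
  constructor <;> apply Nat.le_floor <;> rw [le_div_iff₀' (by assumption)] <;> linarith

theorem card_latticeTriangle (hs : 0 < s) (ht : 0 < t) (hM : 0 ≤ M) :
    #(latticeTriangle s t M) = ∑ b ∈ range (⌊M / s⌋₊ + 1), (⌊(M - s * b) / t⌋₊ + 1) := by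
  rw [card_eq_sum_ones, sum_finset_product _ (range (⌊M / s⌋₊ + 1))
    fun b => range (⌊(M - s * b) / t⌋₊ + 1)]
  · simp only [sum_const, card_range, smul_eq_mul, mul_one]
  · rintro ⟨b, c⟩
    have hc : 0 ≤ t * c := by positivity
    rw [mem_latticeTriangle hs ht, mem_range, mem_range, Nat.lt_succ_iff, Nat.lt_succ_iff,
      Nat.le_floor_iff (by positivity), le_div_iff₀' hs]
    constructor
    · intro h
      exact ⟨by linarith, Nat.le_floor <| (le_div_iff₀' ht).2 <| by linarith⟩
    · rintro ⟨hb, h⟩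
      rw [Nat.le_floor_iff (div_nonneg (sub_nonneg.2 hb) ht.le), le_div_iff₀' ht] at h
      linarith

theorem sum_range_sub_mul {𝕜 : Type*} [Field 𝕜] [CharZero 𝕜] (s M : 𝕜) (K : ℕ) :
    ∑ b ∈ range (K + 1), (M - s * b) = (K + 1) * (2 * M - s * K) / 2 := by
  induction K with
  | zero => simp
  | succ K ih =>
    rw [sum_range_succ, ih]
    push_cast
    ring

theorem sq_div_le_card_latticeTriangle (hs : 0 < s) (ht : 0 < t) (hM : 0 ≤ M) :
    M ^ 2 / (2 * (s * t)) ≤ #(latticeTriangle s t M) := by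
  have hfloor : s * ⌊M / s⌋₊ ≤ M := (le_div_iff₀' hs).1 (Nat.floor_le (by positivity))
  have hlt : M ≤ s * (⌊M / s⌋₊ + 1) := (div_le_iff₀' hs).1 (Nat.lt_floor_add_one _).le
  calc M ^ 2 / (2 * (s * t)) = M * M / (2 * (s * t)) := by rw [sq]
    _ ≤ s * (⌊M / s⌋₊ + 1) * (2 * M - s * ⌊M / s⌋₊) / (2 * (s * t)) := by
        gcongr
        linarith
    _ = ∑ b ∈ range (⌊M / s⌋₊ + 1), (M - s * b) / t := by
        rw [← sum_div, sum_range_sub_mul]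
        field_simp
    _ ≤ #(latticeTriangle s t M) := by
        rw [card_latticeTriangle hs ht hM]
        push_cast
        exact sum_le_sum fun b _ => (Nat.lt_floor_add_one _).le

theorem card_latticeTriangle_le_sq_div (hs : 0 < s) (ht : 0 < t) (hM : 0 ≤ M) :
    (#(latticeTriangle s t M) : ℝ) ≤ (M + s + t) ^ 2 / (2 * (s * t)) := by
  have hterm : ∀ b ∈ range (⌊M / s⌋₊ + 1),
      (⌊(M - s * b) / t⌋₊ + 1 : ℝ) ≤ (M + t - s * b) / t := by
    intro b hb
    rw [mem_range, Nat.lt_succ_iff, Nat.le_floor_iff (by positivity), le_div_iff₀' hs] at hb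
    rw [add_sub_right_comm, add_div, div_self ht.ne']
    gcongr
    exact Nat.floor_le (div_nonneg (sub_nonneg.2 hb) ht.le)
  calc (#(latticeTriangle s t M) : ℝ)
    _ ≤ ∑ b ∈ range (⌊M / s⌋₊ + 1), (M + t - s * b) / t := by
        rw [card_latticeTriangle hs ht hM]
        push_cast
        exact sum_le_sum hterm
    _ = s * (⌊M / s⌋₊ + 1) * (2 * (M + t) - s * ⌊M / s⌋₊) / (2 * (s * t)) := by
        rw [← sum_div, sum_range_sub_mul]
        field_simp
    _ ≤ (M + s + t) ^ 2 / (2 * (s * t)) := by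
        -- AM-GM: the two factors of the numerator have the sum `2 * (M + t) + s`.
        gcongr
        nlinarith [sq_nonneg (M + t - s * ⌊M / s⌋₊ - s / 2), mul_pos hs ht, mul_nonneg hs.le hM]

end LatticeTriangle

section Harmonic

open Finset

variable {x : ℝ}

theorem cast_harmonic_eq_sum_Icc (n : ℕ) : (harmonic n : ℝ) = ∑ k ∈ Icc 1 n, (k : ℝ)⁻¹ := by
  rw [harmonic_eq_sum_Icc]
  push_cast
  rfl

theorem intervalIntegrable_inv_mul_add_log {a b : ℝ} (ha : 0 < a) (hb : 0 < b) (c : ℝ) :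
    IntervalIntegrable (fun t => t⁻¹ * (c + Real.log t)) MeasureTheory.volume a b := by
  have hne : ∀ t ∈ Set.uIcc a b, t ≠ 0 := fun t ht => ((lt_min ha hb).trans_le ht.1).ne'
  exact ContinuousOn.intervalIntegrable <|
    (continuousOn_id.inv₀ hne).mul (continuousOn_const.add (continuousOn_id.log hne))

theorem integral_inv_mul_add_log {a b : ℝ} (ha : 0 < a) (hb : 0 < b) (c : ℝ) :
    ∫ t in a..b, t⁻¹ * (c + Real.log t) =
      (c + Real.log b) ^ 2 / 2 - (c + Real.log a) ^ 2 / 2 := by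
  refine intervalIntegral.integral_eq_sub_of_hasDerivAt
    (f := fun t => (c + Real.log t) ^ 2 / 2) (fun t ht => ?_)
    (intervalIntegrable_inv_mul_add_log ha hb c)
  have ht0 : t ≠ 0 := ((lt_min ha hb).trans_le ht.1).ne'
  refine ((((Real.hasDerivAt_log ht0).const_add c).pow 2).div_const 2).congr_deriv ?_
  push_cast
  ring

theorem intervalIntegrable_inv_mul_sum_Icc_floor (c : ℕ → ℝ) (hx : 1 ≤ x) :
    IntervalIntegrable (fun t : ℝ => t⁻¹ * ∑ k ∈ Icc 1 ⌊t⌋₊, c k) MeasureTheory.volume 1 x := by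
  rw [intervalIntegrable_iff_integrableOn_Icc_of_le hx]
  refine integrableOn_mul_sum_Icc c zero_le_one <| ContinuousOn.integrableOn_Icc ?_
  exact continuousOn_id.inv₀ fun t ht => (zero_lt_one.trans_le ht.1).ne'

theorem sum_mul_log_div_eq_integral (c : ℕ → ℝ) (hx : 1 ≤ x) :
    ∑ k ∈ Icc 1 ⌊x⌋₊, c k * Real.log (x / k) =
      ∫ t in 1..x, t⁻¹ * ∑ k ∈ Icc 1 ⌊t⌋₊, c k := by
  have hderiv : deriv (fun t => Real.log x - Real.log t) = fun t => -t⁻¹ := by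
    ext t
    rw [deriv_const_sub, Real.deriv_log]
  have hne : ∀ t ∈ Set.Icc 1 x, t ≠ 0 := fun t ht => (zero_lt_one.trans_le ht.1).ne'
  have hIcc (g : ℕ → ℝ) (n : ℕ) :
      ∑ k ∈ Icc 0 n, g k * (if k = 0 then 0 else c k) = ∑ k ∈ Icc 1 n, g k * c k := by
    rw [← add_sum_Ioc_eq_sum_Icc n.zero_le, if_pos rfl, mul_zero, zero_add,
      ← Icc_add_one_left_eq_Ioc, zero_add]
    exact sum_congr rfl fun k hk => by
      rw [if_neg (Nat.one_le_iff_ne_zero.1 (mem_Icc.1 hk).1)]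
  have hIcc_one (n : ℕ) : ∑ k ∈ Icc 0 n, (if k = 0 then 0 else c k) = ∑ k ∈ Icc 1 n, c k := by
    simpa only [one_mul] using hIcc (fun _ => 1) n
  have habel := sum_mul_eq_sub_integral_mul₀ (fun k : ℕ => if k = 0 then 0 else c k)
    (f := fun t => Real.log x - Real.log t) (if_pos rfl) x
    (fun t ht => (Real.differentiableAt_log (hne t ht)).const_sub _)
    (by rw [hderiv]; exact (continuousOn_id.inv₀ hne).neg.integrableOn_Icc)
  simp only [hderiv, hIcc_one, hIcc (fun k => Real.log x - Real.log k), sub_self, zero_mul,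
    zero_sub, neg_mul, MeasureTheory.integral_neg, neg_neg] at habel
  rw [intervalIntegral.integral_of_le hx, ← habel]
  refine sum_congr rfl fun k hk => ?_
  have hk0 : (k : ℝ) ≠ 0 := Nat.cast_ne_zero.2 (Nat.one_le_iff_ne_zero.1 (mem_Icc.1 hk).1)
  rw [Real.log_div (by positivity) hk0, mul_comm]

theorem sq_log_div_two_le_sum_inv_mul_log_div (hx : 1 ≤ x) :
    Real.log x ^ 2 / 2 ≤ ∑ k ∈ Icc 1 ⌊x⌋₊, (k : ℝ)⁻¹ * Real.log (x / k) := by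
  have hx0 : 0 < x := by positivity
  calc Real.log x ^ 2 / 2 = ∫ t in 1..x, t⁻¹ * (0 + Real.log t) := by
        rw [integral_inv_mul_add_log one_pos hx0]
        simp
    _ ≤ ∫ t in 1..x, t⁻¹ * ∑ k ∈ Icc 1 ⌊t⌋₊, (k : ℝ)⁻¹ := by
        refine intervalIntegral.integral_mono_on hx
          (intervalIntegrable_inv_mul_add_log one_pos hx0 0)
          (intervalIntegrable_inv_mul_sum_Icc_floor _ hx) fun t ht => ?_
        have ht0 : 0 ≤ t := zero_le_one.trans ht.1
        rw [zero_add, ← cast_harmonic_eq_sum_Icc]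
        gcongr
        exact log_le_harmonic_floor t ht0
    _ = _ := (sum_mul_log_div_eq_integral _ hx).symm

theorem sum_inv_mul_log_div_le (hx : 1 ≤ x) :
    ∑ k ∈ Icc 1 ⌊x⌋₊, (k : ℝ)⁻¹ * Real.log (x / k) ≤ Real.log x ^ 2 / 2 + Real.log x := by
  have hx0 : 0 < x := by positivity
  calc _ = ∫ t in 1..x, t⁻¹ * ∑ k ∈ Icc 1 ⌊t⌋₊, (k : ℝ)⁻¹ :=
        sum_mul_log_div_eq_integral _ hx
    _ ≤ ∫ t in 1..x, t⁻¹ * (1 + Real.log t) := by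
        refine intervalIntegral.integral_mono_on hx
          (intervalIntegrable_inv_mul_sum_Icc_floor _ hx)
          (intervalIntegrable_inv_mul_add_log one_pos hx0 1) fun t ht => ?_
        have ht0 : 0 ≤ t := zero_le_one.trans ht.1
        rw [← cast_harmonic_eq_sum_Icc]
        gcongr
        exact harmonic_floor_le_one_add_log t ht.1
    _ = Real.log x ^ 2 / 2 + Real.log x := by
        rw [integral_inv_mul_add_log one_pos hx0, Real.log_one]
        ring

end Harmonic

section HyperbolaPairs

open Finset

variable {x : ℝ}

/-- The pairs `(s, t)` of positive integers under the hyperbola `s * t ≤ x`. -/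
noncomputable def hyperbolaPairs (x : ℝ) : Finset (ℕ × ℕ) :=
  {p ∈ Icc 1 ⌊x⌋₊ ×ˢ Icc 1 ⌊x⌋₊ | (p.1 * p.2 : ℝ) ≤ x}

theorem mem_hyperbolaPairs {p : ℕ × ℕ} :
    p ∈ hyperbolaPairs x ↔ 1 ≤ p.1 ∧ 1 ≤ p.2 ∧ (p.1 * p.2 : ℝ) ≤ x := by
  simp only [hyperbolaPairs, mem_filter, mem_product, mem_Icc]
  constructor
  · rintro ⟨⟨⟨hs, -⟩, ht, -⟩, hst⟩
    exact ⟨hs, ht, hst⟩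
  · rintro ⟨hs, ht, hst⟩
    have hs' : (1 : ℝ) ≤ p.1 := Nat.one_le_cast.2 hs
    have ht' : (1 : ℝ) ≤ p.2 := Nat.one_le_cast.2 ht
    have hsx : (p.1 : ℝ) ≤ x := (le_mul_of_one_le_right (by positivity) ht').trans hst
    have htx : (p.2 : ℝ) ≤ x := (le_mul_of_one_le_left (by positivity) hs').trans hst
    exact ⟨⟨⟨hs, Nat.le_floor hsx⟩, ht, Nat.le_floor htx⟩, hst⟩

theorem sum_hyperbolaPairs (f : ℕ × ℕ → ℝ) :
    ∑ p ∈ hyperbolaPairs x, f p =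
      ∑ s ∈ Icc 1 ⌊x⌋₊, ∑ t ∈ Icc 1 ⌊x / s⌋₊, f (s, t) := by
  refine sum_finset_product _ _ (fun s : ℕ => Icc 1 ⌊x / s⌋₊) ?_
  rintro ⟨s, t⟩
  simp only [mem_hyperbolaPairs, mem_Icc]
  constructor
  · rintro ⟨hs, ht, hst⟩
    have hs' : (0 : ℝ) < s := Nat.cast_pos.2 hs
    have ht' : (1 : ℝ) ≤ t := Nat.one_le_cast.2 ht
    exact ⟨⟨hs, Nat.le_floor <| (le_mul_of_one_le_right hs'.le ht').trans hst⟩, ht,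
      Nat.le_floor <| (le_div_iff₀' hs').2 hst⟩
  · rintro ⟨⟨hs, -⟩, ht, hst⟩
    have hs' : (0 : ℝ) < s := Nat.cast_pos.2 hs
    rw [Nat.le_floor_iff' (Nat.one_le_iff_ne_zero.1 ht), le_div_iff₀' hs'] at hst
    exact ⟨hs, ht, hst⟩

theorem card_hyperbolaPairs_le (hx : 1 ≤ x) :
    (#(hyperbolaPairs x) : ℝ) ≤ x * (1 + Real.log x) :=
  calc (#(hyperbolaPairs x) : ℝ) = ∑ s ∈ Icc 1 ⌊x⌋₊, (⌊x / s⌋₊ : ℝ) := by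
        rw [card_eq_sum_ones, Nat.cast_sum, sum_hyperbolaPairs]
        simp
    _ ≤ ∑ s ∈ Icc 1 ⌊x⌋₊, x * (s : ℝ)⁻¹ :=
        sum_le_sum fun s _ => Nat.floor_le (by positivity)
    _ = x * harmonic ⌊x⌋₊ := by rw [cast_harmonic_eq_sum_Icc, mul_sum]
    _ ≤ x * (1 + Real.log x) := by
        gcongr
        exact harmonic_floor_le_one_add_log x hx

theorem sum_hyperbolaPairs_inv :
    ∑ p ∈ hyperbolaPairs x, (p.1 * p.2 : ℝ)⁻¹ =
      ∑ s ∈ Icc 1 ⌊x⌋₊, (s : ℝ)⁻¹ * harmonic ⌊x / s⌋₊ := by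
  rw [sum_hyperbolaPairs]
  simp_rw [cast_harmonic_eq_sum_Icc, mul_sum, mul_inv]

theorem sq_log_div_two_le_sum_hyperbolaPairs_inv (hx : 1 ≤ x) :
    Real.log x ^ 2 / 2 ≤ ∑ p ∈ hyperbolaPairs x, (p.1 * p.2 : ℝ)⁻¹ := by
  rw [sum_hyperbolaPairs_inv]
  refine (sq_log_div_two_le_sum_inv_mul_log_div hx).trans <| sum_le_sum fun s _ => ?_
  gcongr
  exact log_le_harmonic_floor _ (by positivity)

theorem sum_hyperbolaPairs_inv_le (hx : 1 ≤ x) :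
    ∑ p ∈ hyperbolaPairs x, (p.1 * p.2 : ℝ)⁻¹ ≤
      Real.log x ^ 2 / 2 + 2 * Real.log x + 1 := by
  have hharmonic : ∀ s ∈ Icc 1 ⌊x⌋₊,
      (s : ℝ)⁻¹ * harmonic ⌊x / s⌋₊ ≤ (s : ℝ)⁻¹ + (s : ℝ)⁻¹ * Real.log (x / s) := by
    intro s hs
    have hs0 : (0 : ℝ) < s := Nat.cast_pos.2 (mem_Icc.1 hs).1
    have hsx : (s : ℝ) ≤ x := (Nat.le_floor_iff (by positivity)).1 (mem_Icc.1 hs).2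
    rw [← mul_one_add]
    gcongr
    exact harmonic_floor_le_one_add_log _ ((one_le_div hs0).2 hsx)
  calc ∑ p ∈ hyperbolaPairs x, (p.1 * p.2 : ℝ)⁻¹
    _ ≤ ∑ s ∈ Icc 1 ⌊x⌋₊, ((s : ℝ)⁻¹ + (s : ℝ)⁻¹ * Real.log (x / s)) := by
        rw [sum_hyperbolaPairs_inv]
        exact sum_le_sum hharmonic
    _ = harmonic ⌊x⌋₊ + ∑ s ∈ Icc 1 ⌊x⌋₊, (s : ℝ)⁻¹ * Real.log (x / s) := by
        rw [sum_add_distrib, cast_harmonic_eq_sum_Icc]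
    _ ≤ Real.log x ^ 2 / 2 + 2 * Real.log x + 1 := by
        linarith [harmonic_floor_le_one_add_log x hx, sum_inv_mul_log_div_le hx]

end HyperbolaPairs

section OrphanCount

open Finset

variable {x : ℝ}

/-- A pair `⟨(s, t), (b, c)⟩` stands for the quadruple `(c + s, b, c, b + t)`; its `orphanForm` is
the number `D` that this quadruple represents, `D = (c + s) * (b + t) - b * c`. -/
def orphanForm (r : Σ _ : ℕ × ℕ, ℕ × ℕ) : ℕ :=
  r.1.1 * r.1.2 + r.1.1 * r.2.1 + r.1.2 * r.2.2

/-- The pairs `⟨(s, t), (b, c)⟩` with `s, t ≥ 1` whose `orphanForm` is at most `x`. -/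
noncomputable def orphanParams (x : ℝ) : Finset (Σ _ : ℕ × ℕ, ℕ × ℕ) :=
  (hyperbolaPairs x).sigma fun p => latticeTriangle p.1 p.2 (x - p.1 * p.2)

theorem mem_orphanParams {r : Σ _ : ℕ × ℕ, ℕ × ℕ} :
    r ∈ orphanParams x ↔ 1 ≤ r.1.1 ∧ 1 ≤ r.1.2 ∧ (orphanForm r : ℝ) ≤ x := by
  obtain ⟨⟨s, t⟩, b, c⟩ := r
  simp only [orphanParams, orphanForm, mem_sigma, mem_hyperbolaPairs, and_assoc]
  refine and_congr_right fun hs => and_congr_right fun ht => ?_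
  rw [mem_latticeTriangle (Nat.cast_pos.2 hs) (Nat.cast_pos.2 ht)]
  push_cast
  have hnonneg : (0 : ℝ) ≤ s * b + t * c := by positivity
  constructor
  · rintro ⟨-, h⟩
    linarith
  · intro h
    exact ⟨by linarith, by linarith⟩

-- The condition `b + c < D` is automatic, since `D ≥ 1 + b + c` as soon as `s, t ≥ 1`.
theorem orphanCount_eq_ncard_orphanForm (D : ℕ) :
    orphanCount D =
      {r : Σ _ : ℕ × ℕ, ℕ × ℕ | 1 ≤ r.1.1 ∧ 1 ≤ r.1.2 ∧ orphanForm r = D}.ncard := by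
  symm
  refine Set.ncard_congr (fun r _ => (r.2.2 + r.1.1, r.2.1, r.2.2, r.2.1 + r.1.2)) ?_ ?_ ?_
  · rintro ⟨⟨s, t⟩, b, c⟩ ⟨hs, ht, rfl⟩
    simp only [orphanForm, Set.mem_ofPred_eq] at hs ht ⊢
    exact ⟨by nlinarith, by omega, by omega, by ring⟩
  · rintro ⟨⟨s, t⟩, b, c⟩ ⟨⟨s', t'⟩, b', c'⟩ _ _ h
    simp only [Prod.mk.injEq] at h
    obtain ⟨hs, rfl, rfl, ht⟩ := h
    rw [Nat.add_left_cancel hs, Nat.add_left_cancel ht]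
  · rintro ⟨a, b, c, d⟩ ⟨-, hca, hbd, h⟩
    simp only at hca hbd h
    obtain ⟨s, rfl⟩ := Nat.exists_eq_add_of_le hca.le
    obtain ⟨t, rfl⟩ := Nat.exists_eq_add_of_le hbd.le
    have hs : 1 ≤ s := by omega
    have ht : 1 ≤ t := by omega
    refine ⟨⟨(s, t), b, c⟩, ⟨hs, ht, ?_⟩, rfl⟩
    simp only [orphanForm]
    linarith

theorem sum_orphanCount_eq_card_orphanParams (hx : 0 ≤ x) :
    ∑ D ∈ Icc 1 ⌊x⌋₊, orphanCount D = #(orphanParams x) := by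
  rw [card_eq_sum_card_fiberwise (f := orphanForm) (t := Icc 1 ⌊x⌋₊)]
  · refine sum_congr rfl fun D hD => ?_
    have hDx : (D : ℝ) ≤ x := (Nat.le_floor_iff hx).1 (mem_Icc.1 hD).2
    rw [orphanCount_eq_ncard_orphanForm, ← Set.ncard_coe_finset]
    congr 1
    ext r
    simp only [coe_filter, mem_orphanParams, Set.mem_ofPred_eq]
    constructor
    · rintro ⟨hs, ht, rfl⟩
      exact ⟨⟨hs, ht, hDx⟩, rfl⟩
    · rintro ⟨⟨hs, ht, -⟩, hD⟩
      exact ⟨hs, ht, hD⟩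
  · intro r hr
    obtain ⟨hs, ht, hrx⟩ := mem_orphanParams.1 hr
    have hst : 0 < r.1.1 * r.1.2 := Nat.mul_pos hs ht
    exact mem_coe.2 <| mem_Icc.2 ⟨by rw [orphanForm]; omega, Nat.le_floor hrx⟩

theorem sum_orphanCount_eq_sum_card_latticeTriangle (hx : 0 ≤ x) :
    ∑ D ∈ Icc 1 ⌊x⌋₊, (orphanCount D : ℝ) =
      ∑ p ∈ hyperbolaPairs x, (#(latticeTriangle p.1 p.2 (x - p.1 * p.2)) : ℝ) := by
  rw [← Nat.cast_sum, sum_orphanCount_eq_card_orphanParams hx, orphanParams, card_sigma,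
    Nat.cast_sum]

theorem sum_orphanCount_le_mul_sum_inv (hx : 0 ≤ x) :
    ∑ D ∈ Icc 1 ⌊x⌋₊, (orphanCount D : ℝ) ≤
      (x + 1) ^ 2 / 2 * ∑ p ∈ hyperbolaPairs x, (p.1 * p.2 : ℝ)⁻¹ := by
  rw [sum_orphanCount_eq_sum_card_latticeTriangle hx, mul_sum]
  refine sum_le_sum fun ⟨s, t⟩ hp => ?_
  obtain ⟨hs, ht, hst⟩ := mem_hyperbolaPairs.1 hp
  dsimp only at hs ht hst ⊢
  have hs1 : (1 : ℝ) ≤ s := Nat.one_le_cast.2 hs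
  have ht1 : (1 : ℝ) ≤ t := Nat.one_le_cast.2 ht
  have hM : 0 ≤ x - s * t := sub_nonneg.2 hst
  have hside : x - s * t + s + t ≤ x + 1 := by
    linarith [mul_nonneg (sub_nonneg.2 hs1) (sub_nonneg.2 ht1)]
  calc (#(latticeTriangle s t (x - s * t)) : ℝ)
    _ ≤ (x - s * t + s + t) ^ 2 / (2 * (s * t)) :=
        card_latticeTriangle_le_sq_div (by positivity) (by positivity) hM
    _ ≤ (x + 1) ^ 2 / (2 * (s * t)) := by
        gcongr
    _ = (x + 1) ^ 2 / 2 * (s * t : ℝ)⁻¹ := by rw [← div_div, div_eq_mul_inv]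

theorem mul_sum_inv_sub_le_sum_orphanCount (hx : 0 ≤ x) :
    x ^ 2 / 2 * ∑ p ∈ hyperbolaPairs x, (p.1 * p.2 : ℝ)⁻¹ - x * #(hyperbolaPairs x) ≤
      ∑ D ∈ Icc 1 ⌊x⌋₊, (orphanCount D : ℝ) := by
  rw [sum_orphanCount_eq_sum_card_latticeTriangle hx, mul_sum, mul_comm x, ← nsmul_eq_mul,
    ← sum_const, ← sum_sub_distrib]
  refine sum_le_sum fun ⟨s, t⟩ hp => ?_
  obtain ⟨hs, ht, hst⟩ := mem_hyperbolaPairs.1 hp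
  dsimp only at hs ht hst ⊢
  have hs0 : (0 : ℝ) < s := Nat.cast_pos.2 hs
  have ht0 : (0 : ℝ) < t := Nat.cast_pos.2 ht
  calc x ^ 2 / 2 * (s * t : ℝ)⁻¹ - x
    _ ≤ x ^ 2 / 2 * (s * t : ℝ)⁻¹ - x + s * t / 2 := le_add_of_nonneg_right (by positivity)
    _ = (x - s * t) ^ 2 / (2 * (s * t)) := by
        field_simp
        ring
    _ ≤ #(latticeTriangle s t (x - s * t)) :=
        sq_div_le_card_latticeTriangle hs0 ht0 (sub_nonneg.2 hst)

theorem sum_orphanCount_le (hx : 1 ≤ x) :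
    ∑ D ∈ Icc 1 ⌊x⌋₊, (orphanCount D : ℝ) ≤
      (x + 1) ^ 2 / 2 * (Real.log x ^ 2 / 2 + 2 * Real.log x + 1) := by
  refine (sum_orphanCount_le_mul_sum_inv (by positivity)).trans ?_
  gcongr
  exact sum_hyperbolaPairs_inv_le hx

theorem le_sum_orphanCount (hx : 1 ≤ x) :
    x ^ 2 / 2 * (Real.log x ^ 2 / 2) - x * (x * (1 + Real.log x)) ≤
      ∑ D ∈ Icc 1 ⌊x⌋₊, (orphanCount D : ℝ) := by
  refine le_trans ?_ (mul_sum_inv_sub_le_sum_orphanCount (by positivity))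
  gcongr
  · exact sq_log_div_two_le_sum_hyperbolaPairs_inv hx
  · exact card_hyperbolaPairs_le hx

end OrphanCount

theorem stmt_3 :
    (fun x : ℝ =>
        (∑ D ∈ Finset.Icc 1 ⌊x⌋₊, (orphanCount D : ℝ)) -
          (1 / 4) * x ^ 2 * (Real.log x) ^ 2)
      =O[atTop] (fun x : ℝ => x ^ 2 * Real.log x) := by
  refine IsBigO.of_bound 8 ?_
  filter_upwards [eventually_ge_atTop 1, Real.tendsto_log_atTop.eventually_ge_atTop 1]
    with x hx hlog
  have hlog_le : Real.log x ≤ x := Real.log_le_self (by positivity)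
  have hlower := le_sum_orphanCount hx
  have hupper := sum_orphanCount_le hx
  generalize Real.log x = L at *
  have hsq : x ^ 2 ≤ x ^ 2 * L := le_mul_of_one_le_right (by positivity) hlog
  have hexcess : (2 * x + 1) * (L ^ 2 / 4 + L + 1 / 2) ≤ 6 * (x ^ 2 * L) :=
    calc (2 * x + 1) * (L ^ 2 / 4 + L + 1 / 2) ≤ (3 * x) * (7 / 4 * (x * L)) := by
          gcongr <;> nlinarith
      _ ≤ 6 * (x ^ 2 * L) := by nlinarith
  rw [Real.norm_eq_abs, Real.norm_of_nonneg (by positivity), abs_le]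
  constructor <;> linarith
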